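/- Fix an integer d ≥ 1, p ∈ (1,∞), a penalty function φ, and let (μ_t)_{t≥0} be a convolution semigroup in 𝒫_p(ℝ^d) with 𝒲_p(μ_t, δ_0) → 0 as t ↓ 0. Then for every f ∈ D(A^μ) ∩ C₀¹(ℝ^d), the quotient (𝒮(t)f − f)/t converges uniformly on ℝ^d, as t ↓ 0, to the function x ↦ A^μ f(x) + φ*(|∇f(x)|); that is, lim_{t↓0} ‖(𝒮(t)f − f)/t − (A^μ f + φ*(|∇f|))‖_∞ = 0. -/

import Mathlib

open MeasureTheory Filter Topology ENNReal NNReal Set ZeroAtInfty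
noncomputable section

/-- Euclidean space ℝ^d. -/
abbrev Ed (d : ℕ) := EuclideanSpace ℝ (Fin d)

/-- `𝒫_p(ℝ^d)`: Borel probability measures with finite `p`-th moment. -/
def MemPp {d : ℕ} (p : ℝ) (μ : Measure (Ed d)) : Prop :=
  IsProbabilityMeasure μ ∧ ∫⁻ x, (‖x‖₊ : ℝ≥0∞) ^ p ∂μ < ∞

/-- `γ` is a coupling of `μ` and `ν`. -/
def IsCoupling {d : ℕ} (γ : Measure (Ed d × Ed d)) (μ ν : Measure (Ed d)) : Prop :=
  γ.map Prod.fst = μ ∧ γ.map Prod.snd = ν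

/-- The `p`-Wasserstein distance `𝒲_p(μ, ν)`. -/
def Wp {d : ℕ} (p : ℝ) (μ ν : Measure (Ed d)) : ℝ :=
  (⨅ γ ∈ {γ : Measure (Ed d × Ed d) | IsCoupling γ μ ν},
    (∫⁻ q, (‖q.2 - q.1‖₊ : ℝ≥0∞) ^ p ∂γ) ^ (1 / p)).toReal

/-- The scaled penalty `φ_t(r) = t·φ(r/t)` for `t > 0`; `φ_0(0) = 0`, `φ_0(r) = ∞` for `r > 0`. -/
def phit (φ : ℝ≥0 → ℝ≥0∞) (t : ℝ) (r : ℝ≥0) : ℝ≥0∞ :=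
  if 0 < t then (t.toNNReal : ℝ≥0∞) * φ (r / t.toNNReal) else (if r = 0 then 0 else ∞)

/-- `φ` is a penalty function: lower semicontinuous, convex, increasing, not constant,
`φ(0) = 0`, and `x ↦ φ(x^{1/p})` is convex. -/
structure IsPenalty (p : ℝ) (φ : ℝ≥0 → ℝ≥0∞) : Prop where
  lsc : LowerSemicontinuous φ
  convex : ∀ a b l m : ℝ≥0, l + m = 1 →
    φ (l * a + m * b) ≤ (l : ℝ≥0∞) * φ a + (m : ℝ≥0∞) * φ b
  mono : Monotone φ
  not_const : ∃ a b, φ a ≠ φ b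
  map_zero : φ 0 = 0
  convex_rpow : ∀ a b l m : ℝ≥0, l + m = 1 →
    φ ((l * a + m * b) ^ (1 / p)) ≤ (l : ℝ≥0∞) * φ (a ^ (1 / p)) + (m : ℝ≥0∞) * φ (b ^ (1 / p))

/-- The convex conjugate `φ*(y) = sup_{x ≥ 0} (xy − φ(x))`. -/
def phiStar (φ : ℝ≥0 → ℝ≥0∞) (y : ℝ≥0) : ℝ≥0∞ :=
  ⨆ x : ℝ≥0, ((x * y : ℝ≥0) : ℝ≥0∞) - φ x

/-- The one-step operator `S(t)f(x) = sup_ν ( ∫ f(x+y) ν(dy) − φ_t(𝒲_p(μ_t, ν)) )`. -/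
def Sop {d : ℕ} (p : ℝ) (φ : ℝ≥0 → ℝ≥0∞) (μt : Measure (Ed d)) (t : ℝ)
    (f : Ed d → ℝ) (x : Ed d) : ℝ :=
  sSup { r : ℝ | ∃ ν : Measure (Ed d), MemPp p ν ∧ ∃ c : ℝ, 0 ≤ c ∧
    phit φ t (Wp p μt ν).toNNReal ≤ ENNReal.ofReal c ∧ r = (∫ y, f (x + y) ∂ν) - c }

/-- The iterated operator `𝒮ⁿ(t) = S(2⁻ⁿ)^{∘ k} ∘ S(t − k·2⁻ⁿ)`, `k = ⌊2ⁿ t⌋`. -/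
def SiterN {d : ℕ} (p : ℝ) (φ : ℝ≥0 → ℝ≥0∞) (μ : ℝ → Measure (Ed d)) (n : ℕ) (t : ℝ)
    (f : Ed d → ℝ) : Ed d → ℝ :=
  (fun g => Sop p φ (μ ((2 : ℝ) ^ n)⁻¹) ((2 : ℝ) ^ n)⁻¹ g)^[⌊(2:ℝ)^n * t⌋₊]
    (Sop p φ (μ (t - ⌊(2:ℝ)^n * t⌋₊ * ((2:ℝ)^n)⁻¹)) (t - ⌊(2:ℝ)^n * t⌋₊ * ((2:ℝ)^n)⁻¹) f)

/-- The limiting operator `𝒮(t)f = lim_n 𝒮ⁿ(t)f` (a decreasing limit, i.e. an infimum). -/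
def Slim {d : ℕ} (p : ℝ) (φ : ℝ≥0 → ℝ≥0∞) (μ : ℝ → Measure (Ed d)) (t : ℝ)
    (f : Ed d → ℝ) (x : Ed d) : ℝ :=
  ⨅ n : ℕ, SiterN p φ μ n t f x

/-- `f ∈ C₀(ℝ^d)`: continuous and vanishing at infinity. -/
def IsC0 {d : ℕ} (f : Ed d → ℝ) : Prop :=
  Continuous f ∧ Tendsto f (cocompact (Ed d)) (𝓝 0)

/-- `(μ_t)_{t ≥ 0}` is a convolution semigroup in `𝒫_p(ℝ^d)`. -/
def IsConvSemigroup {d : ℕ} (p : ℝ) (μ : ℝ → Measure (Ed d)) : Prop :=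
  μ 0 = Measure.dirac 0 ∧ (∀ s t : ℝ, 0 ≤ s → 0 ≤ t → μ (s + t) = (μ s).conv (μ t)) ∧
    ∀ t : ℝ, 0 ≤ t → MemPp p (μ t)

/-- `𝒲_p(μ_t, δ_0) → 0` as `t ↓ 0`. -/
def WContinuousAtZero {d : ℕ} (p : ℝ) (μ : ℝ → Measure (Ed d)) : Prop :=
  Tendsto (fun t => Wp p (μ t) (Measure.dirac 0)) (𝓝[>] (0:ℝ)) (𝓝 0)

/-- The semigroup of the underlying Lévy process, `S^μ(t)f(x) = ∫ f(x+y) μ_t(dy)`. -/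
def Smu {d : ℕ} (μ : ℝ → Measure (Ed d)) (t : ℝ) (f : Ed d → ℝ) (x : Ed d) : ℝ :=
  ∫ y, f (x + y) ∂(μ t)

/-- `f ∈ D(A^μ)` with `A^μ f = Af`: `(S^μ(t)f − f)/t → Af` uniformly as `t ↓ 0`. -/
def HasGenerator {d : ℕ} (μ : ℝ → Measure (Ed d)) (f Af : Ed d → ℝ) : Prop :=
  TendstoUniformly (fun t x => (Smu μ t f x - f x) / t) Af (𝓝[>] (0:ℝ))

/-- `f ∈ C₀¹(ℝ^d)`: continuously differentiable, vanishing at infinity, with gradient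
vanishing at infinity. -/
def IsC01 {d : ℕ} (f : Ed d → ℝ) : Prop :=
  IsC0 f ∧ ContDiff ℝ 1 f ∧ Tendsto (fun x => gradient f x) (cocompact (Ed d)) (𝓝 0)



/-! ### Wasserstein helper lemmas -/

lemma coupling_lintegral_fst {d : ℕ} {γ : Measure (Ed d × Ed d)} {μ ν : Measure (Ed d)}
    (h : IsCoupling γ μ ν) {G : Ed d → ℝ≥0∞} (hG : Measurable G) :
    ∫⁻ q, G q.1 ∂γ = ∫⁻ y, G y ∂μ := by
  rw [← h.1, lintegral_map hG measurable_fst]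

lemma coupling_lintegral_snd {d : ℕ} {γ : Measure (Ed d × Ed d)} {μ ν : Measure (Ed d)}
    (h : IsCoupling γ μ ν) {G : Ed d → ℝ≥0∞} (hG : Measurable G) :
    ∫⁻ q, G q.2 ∂γ = ∫⁻ y, G y ∂ν := by
  rw [← h.2, lintegral_map hG measurable_snd]

lemma coupling_prob {d : ℕ} {γ : Measure (Ed d × Ed d)} {μ ν : Measure (Ed d)}
    (h : IsCoupling γ μ ν) [IsProbabilityMeasure μ] : IsProbabilityMeasure γ := by
  constructor
  have := measure_univ (μ := μ)
  rw [← h.1, Measure.map_apply measurable_fst MeasurableSet.univ] at this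
  simpa using this

lemma measurable_nn {d : ℕ} (p : ℝ) : Measurable (fun y : Ed d => (‖y‖₊ : ℝ≥0∞) ^ p) := by
  fun_prop

lemma prod_coupling {d : ℕ} (μ ν : Measure (Ed d)) [IsProbabilityMeasure μ]
    [IsProbabilityMeasure ν] : IsCoupling (μ.prod ν) μ ν := by
  constructor
  · simp
  · simp

lemma wp_inf_ne_top {d : ℕ} {p : ℝ} (hp : 1 < p) {μ ν : Measure (Ed d)} (hμ : MemPp p μ)
    (hν : MemPp p ν) :
    (⨅ γ ∈ {γ : Measure (Ed d × Ed d) | IsCoupling γ μ ν},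
    (∫⁻ q, (‖q.2 - q.1‖₊ : ℝ≥0∞) ^ p ∂γ) ^ (1 / p)) ≠ ∞ := by
  have := hμ.1
  have := hν.1
  have hc := prod_coupling μ ν
  refine ne_top_of_le_ne_top ?_ (iInf₂_le (μ.prod ν) hc)
  refine ENNReal.rpow_ne_top_of_nonneg (by positivity) ?_
  have h1 : ∫⁻ q, (‖q.2 - q.1‖₊ : ℝ≥0∞) ^ p ∂(μ.prod ν) ≤
      ∫⁻ q, (2 : ℝ≥0∞) ^ (p - 1) * ((‖q.1‖₊ : ℝ≥0∞) ^ p + (‖q.2‖₊ : ℝ≥0∞) ^ p)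
        ∂(μ.prod ν) := by
    refine lintegral_mono fun q => ?_
    refine le_trans ?_ (ENNReal.rpow_add_le_mul_rpow_add_rpow _ _ hp.le)
    refine ENNReal.rpow_le_rpow ?_ (by linarith)
    have : ‖q.2 - q.1‖₊ ≤ ‖q.1‖₊ + ‖q.2‖₊ := by
      rw [add_comm]; exact nnnorm_sub_le _ _
    exact_mod_cast this
  refine ne_top_of_le_ne_top ?_ h1
  rw [lintegral_const_mul _ (by fun_prop), lintegral_add_left (by fun_prop),
    coupling_lintegral_fst hc (measurable_nn p), coupling_lintegral_snd hc (measurable_nn p)]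
  refine ENNReal.mul_ne_top (ENNReal.rpow_ne_top_of_nonneg (by linarith) (by simp)) ?_
  exact ENNReal.add_ne_top.2 ⟨hμ.2.ne, hν.2.ne⟩

lemma wp_nonneg {d : ℕ} (p : ℝ) (μ ν : Measure (Ed d)) : 0 ≤ Wp p μ ν := ENNReal.toReal_nonneg

lemma wp_exists {d : ℕ} {p : ℝ} (hp : 1 < p) {μ ν : Measure (Ed d)} (hμ : MemPp p μ)
    (hν : MemPp p ν) {s : ℝ} (hs : Wp p μ ν < s) :
    ∃ γ, IsCoupling γ μ ν ∧
      (∫⁻ q, (‖q.2 - q.1‖₊ : ℝ≥0∞) ^ p ∂γ) ^ (1 / p) ≤ ENNReal.ofReal s := by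
  have h := wp_inf_ne_top hp hμ hν
  have h2 : (⨅ γ ∈ {γ : Measure (Ed d × Ed d) | IsCoupling γ μ ν},
    (∫⁻ q, (‖q.2 - q.1‖₊ : ℝ≥0∞) ^ p ∂γ) ^ (1 / p)) < ENNReal.ofReal s := by
    rw [← ENNReal.ofReal_toReal h]
    exact (ENNReal.ofReal_lt_ofReal_iff ((wp_nonneg p μ ν).trans_lt hs)).2 hs
  obtain ⟨γ, hγ⟩ := iInf_lt_iff.1 h2
  obtain ⟨hc, hγ⟩ := iInf_lt_iff.1 hγ
  exact ⟨γ, hc, hγ.le⟩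

lemma wp_dirac {d : ℕ} {p : ℝ} (hp : 1 < p) {μ : Measure (Ed d)} (hμ : MemPp p μ) :
    (∫⁻ y, (‖y‖₊ : ℝ≥0∞) ^ p ∂μ) ^ (1 / p) ≤ ENNReal.ofReal (Wp p μ (Measure.dirac 0)) := by
  have hν : MemPp p (Measure.dirac (0 : Ed d)) := by
    refine ⟨inferInstance, ?_⟩
    rw [lintegral_dirac' _ (measurable_nn p)]
    have : (0:ℝ) < p := by linarith
    simp [ENNReal.zero_rpow_of_pos this]
  rw [Wp, ENNReal.ofReal_toReal (wp_inf_ne_top hp hμ hν)]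
  refine le_iInf₂ fun γ hγ => ?_
  refine ENNReal.rpow_le_rpow ?_ (by positivity)
  have h0 : ∀ᵐ q ∂γ, q.2 = 0 := by
    have : ∀ᵐ y ∂(γ.map Prod.snd), y = (0 : Ed d) := by
      rw [hγ.2]
      exact (ae_dirac_iff (p := fun y => y = (0 : Ed d)) (measurableSet_singleton 0)).2 rfl
    exact ae_of_ae_map measurable_snd.aemeasurable this
  rw [← coupling_lintegral_fst hγ (measurable_nn p)]
  refine lintegral_mono_ae ?_
  filter_upwards [h0] with q hq
  simp [hq]

lemma memPp_shift {d : ℕ} {p : ℝ} (hp : 1 < p) {μ : Measure (Ed d)} (hμ : MemPp p μ)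
    (w : Ed d) : MemPp p (μ.map (fun y => y + w)) := by
  have := hμ.1
  refine ⟨Measure.isProbabilityMeasure_map (by fun_prop), ?_⟩
  rw [lintegral_map (measurable_nn p) (by fun_prop)]
  have h1 : ∫⁻ y, (‖y + w‖₊ : ℝ≥0∞) ^ p ∂μ ≤
      ∫⁻ y, (2 : ℝ≥0∞) ^ (p - 1) * ((‖y‖₊ : ℝ≥0∞) ^ p + (‖w‖₊ : ℝ≥0∞) ^ p) ∂μ := by
    refine lintegral_mono fun q => ?_
    refine le_trans ?_ (ENNReal.rpow_add_le_mul_rpow_add_rpow _ _ hp.le)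
    refine ENNReal.rpow_le_rpow ?_ (by linarith)
    exact_mod_cast nnnorm_add_le _ _
  refine h1.trans_lt (lt_top_iff_ne_top.2 ?_)
  rw [lintegral_const_mul _ (by fun_prop), lintegral_add_left (by fun_prop)]
  refine ENNReal.mul_ne_top (ENNReal.rpow_ne_top_of_nonneg (by linarith) (by simp)) ?_
  refine ENNReal.add_ne_top.2 ⟨hμ.2.ne, ?_⟩
  rw [lintegral_const, measure_univ, mul_one]
  exact ENNReal.rpow_ne_top_of_nonneg (by linarith) (by simp)

lemma wp_shift {d : ℕ} {p : ℝ} (hp : 1 < p) {μ : Measure (Ed d)} (hμ : MemPp p μ)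
    (w : Ed d) : Wp p μ (μ.map (fun y => y + w)) ≤ ‖w‖ := by
  have := hμ.1
  have hp0 : (0:ℝ) < p := by linarith
  have hc : IsCoupling (μ.map (fun y => (y, y + w))) μ (μ.map (fun y => y + w)) := by
    constructor
    · rw [Measure.map_map measurable_fst (by fun_prop)]
      exact Measure.map_id
    · rw [Measure.map_map measurable_snd (by fun_prop)]
      rfl
  refine ENNReal.toReal_le_of_le_ofReal (norm_nonneg _) ((iInf₂_le (μ.map (fun y => (y, y + w))) hc).trans ?_)
  rw [lintegral_map (by fun_prop) (by fun_prop)]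
  simp only [add_sub_cancel_left, lintegral_const, measure_univ, mul_one]
  rw [one_div, ENNReal.rpow_rpow_inv hp0.ne']
  simp [enorm_eq_nnnorm]

/-! ### Penalty growth -/

lemma penalty_growth {p : ℝ} (hp : 1 < p) {φ : ℝ≥0 → ℝ≥0∞} (hφ : IsPenalty p φ) (M : ℝ≥0) :
    ∃ R : ℝ≥0, 0 < R ∧ ∀ r, R ≤ r → ((M * r : ℝ≥0) : ℝ≥0∞) ≤ φ r := by
  have hp0 : (0:ℝ) < p := by linarith
  obtain ⟨r0, hr0⟩ : ∃ r0, φ r0 ≠ 0 := by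
    by_contra! h
    obtain ⟨a, b, hab⟩ := hφ.not_const
    exact hab (by rw [h a, h b])
  have hr0pos : 0 < r0 := by
    rcases eq_or_ne r0 0 with h | h
    · exact absurd (h ▸ hφ.map_zero) hr0
    · exact pos_iff_ne_zero.2 h
  obtain ⟨c, hc0, hc⟩ : ∃ c : ℝ≥0, 0 < c ∧ (c : ℝ≥0∞) ≤ φ r0 := by
    obtain ⟨c, h1, h2⟩ := ENNReal.lt_iff_exists_nnreal_btwn.1 (pos_iff_ne_zero.2 hr0)
    exact ⟨c, by exact_mod_cast h1, h2.le⟩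
  have key : ∀ r, r0 ≤ r → ((c * (r / r0) ^ p : ℝ≥0) : ℝ≥0∞) ≤ φ r := by
    intro r hr
    have hrpos : 0 < r := hr0pos.trans_le hr
    have hle : (r0 / r) ^ p ≤ 1 := NNReal.rpow_le_one (div_le_one_of_le₀ hr (zero_le)) hp0.le
    have := hφ.convex_rpow (r ^ p) 0 ((r0 / r) ^ p) (1 - (r0 / r) ^ p) (add_tsub_cancel_of_le hle)
    have e1 : ((r0 / r) ^ p * r ^ p) ^ (1 / p) = r0 := by
      rw [← NNReal.mul_rpow, div_mul_cancel₀ _ hrpos.ne', one_div, NNReal.rpow_rpow_inv hp0.ne']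
    have e2 : (r ^ p) ^ (1 / p) = r := by
      rw [one_div, NNReal.rpow_rpow_inv hp0.ne']
    have e3 : (0:ℝ≥0) ^ (1 / p) = 0 := NNReal.zero_rpow (by positivity)
    rw [mul_zero, add_zero, e1, e2, e3, hφ.map_zero, mul_zero, add_zero] at this
    have h4 : ((r / r0) ^ p : ℝ≥0) * (r0 / r) ^ p = 1 := by
      rw [← NNReal.mul_rpow]
      have : r / r0 * (r0 / r) = 1 := by field_simp
      rw [this, NNReal.one_rpow]
    calc ((c * (r / r0) ^ p : ℝ≥0) : ℝ≥0∞) = ((r / r0) ^ p : ℝ≥0) * (c : ℝ≥0∞) := by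
          push_cast; ring
      _ ≤ ((r / r0) ^ p : ℝ≥0) * ((((r0 / r) ^ p : ℝ≥0) : ℝ≥0∞) * φ r) := by
          gcongr; exact hc.trans this
      _ = φ r := by
          rw [← mul_assoc, ← ENNReal.coe_mul, h4]; simp
  have hlim : Tendsto (fun r : ℝ => r ^ (p - 1)) atTop atTop := tendsto_rpow_atTop (by linarith)
  obtain ⟨R, hR⟩ := eventually_atTop.1 (hlim.eventually_ge_atTop ((M : ℝ) * (r0 : ℝ) ^ p / c))
  refine ⟨max R.toNNReal (max r0 1), by positivity, fun r hr => ?_⟩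
  have h1 : R ≤ r := by
    have := (le_max_left _ _).trans hr
    exact Real.toNNReal_le_iff_le_coe.1 this
  have h2 : r0 ≤ r := ((le_max_left _ _).trans (le_max_right _ _)).trans hr
  refine le_trans ?_ (key r h2)
  norm_cast
  have h3 := hR r h1
  rw [← NNReal.coe_le_coe]
  push_cast
  have hrpos : (0:ℝ) < r := by exact_mod_cast hr0pos.trans_le h2
  have hr0' : (0:ℝ) < r0 := by exact_mod_cast hr0pos
  have hc' : (0:ℝ) < c := by exact_mod_cast hc0
  have hq : (0:ℝ) < (r0:ℝ) ^ p := by positivity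
  rw [Real.div_rpow hrpos.le hr0'.le]
  rw [div_le_iff₀ hc'] at h3
  have h5 : (r:ℝ) ^ p = r ^ (p - 1) * r := by
    rw [← Real.rpow_add_one hrpos.ne']; ring_nf
  rw [h5, ← mul_div_assoc, le_div_iff₀ hq]
  nlinarith

lemma phiStar_ne_top {p : ℝ} (hp : 1 < p) {φ : ℝ≥0 → ℝ≥0∞} (hφ : IsPenalty p φ) (y : ℝ≥0) :
    phiStar φ y ≠ ∞ := by
  obtain ⟨R, -, hR⟩ := penalty_growth hp hφ y
  refine ne_top_of_le_ne_top (b := ((R * y : ℝ≥0) : ℝ≥0∞)) ENNReal.coe_ne_top (iSup_le fun x => ?_)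
  rcases le_total R x with h | h
  · have := hR x h
    rw [mul_comm] at this
    rw [tsub_eq_zero_of_le this]; exact zero_le
  · refine tsub_le_self.trans ?_
    exact_mod_cast mul_le_mul_left h y

/-! ### The one-step operator -/

/-- Bounded and uniformly continuous. -/
def GoodFn {d : ℕ} (B : ℝ) (g : Ed d → ℝ) : Prop := UniformContinuous g ∧ ∀ x, |g x| ≤ B

lemma GoodFn.integrable {d : ℕ} {B : ℝ} {g : Ed d → ℝ} (hg : GoodFn B g) {α : Type*}
    [MeasurableSpace α] (ν : Measure α) [IsProbabilityMeasure ν] {T : α → Ed d}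
    (hT : Measurable T) : Integrable (fun a => g (T a)) ν := by
  refine Integrable.of_bound (C := B) ?_ (ae_of_all _ fun a => hg.2 _)
  exact (hg.1.continuous.measurable.comp hT).aestronglyMeasurable

lemma GoodFn.integral_le {d : ℕ} {B : ℝ} {g : Ed d → ℝ} (hg : GoodFn B g) {α : Type*}
    [MeasurableSpace α] (ν : Measure α) [IsProbabilityMeasure ν] (T : α → Ed d) :
    |∫ a, g (T a) ∂ν| ≤ B := by
  have := norm_integral_le_of_norm_le_const (μ := ν) (f := fun a => g (T a)) (C := B)
    (ae_of_all _ fun a => hg.2 _)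
  simpa using this

lemma phit_zero {p : ℝ} {φ : ℝ≥0 → ℝ≥0∞} (hφ : IsPenalty p φ) (t : ℝ) : phit φ t 0 = 0 := by
  unfold phit
  split_ifs <;> simp_all [hφ.map_zero]

lemma wp_self {d : ℕ} {p : ℝ} (hp : 1 < p) {μ : Measure (Ed d)} (hμ : MemPp p μ) :
    Wp p μ μ = 0 := by
  have := wp_shift hp hμ 0
  simp only [add_zero, norm_zero, Measure.map_id'] at this
  exact le_antisymm this (wp_nonneg _ _ _)

lemma le_sop {d : ℕ} {p : ℝ} {φ : ℝ≥0 → ℝ≥0∞} {μt : Measure (Ed d)} {t B : ℝ}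
    {g : Ed d → ℝ} (hg : GoodFn B g) (x : Ed d) {ν : Measure (Ed d)} (hν : MemPp p ν) {c : ℝ}
    (hc : 0 ≤ c) (h : phit φ t (Wp p μt ν).toNNReal ≤ ENNReal.ofReal c) :
    (∫ y, g (x + y) ∂ν) - c ≤ Sop p φ μt t g x := by
  refine le_csSup ⟨B, ?_⟩ ⟨ν, hν, c, hc, h, rfl⟩
  rintro r ⟨ν, hν, c, hc, -, rfl⟩
  have := hν.1
  have := (abs_le.1 (hg.integral_le ν (fun y => x + y))).2
  linarith

lemma le_sop_self {d : ℕ} {p : ℝ} (hp : 1 < p) {φ : ℝ≥0 → ℝ≥0∞} (hφ : IsPenalty p φ)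
    {μt : Measure (Ed d)} (hμ : MemPp p μt) {t B : ℝ}
    {g : Ed d → ℝ} (hg : GoodFn B g) (x : Ed d) :
    (∫ y, g (x + y) ∂μt) ≤ Sop p φ μt t g x := by
  have := le_sop (t := t) (φ := φ) (μt := μt) hg x hμ (c := 0) le_rfl
    (by rw [wp_self hp hμ]; simp [phit_zero hφ])
  simpa using this

lemma sop_le {d : ℕ} {p : ℝ} (hp : 1 < p) {φ : ℝ≥0 → ℝ≥0∞} (hφ : IsPenalty p φ)
    {μt : Measure (Ed d)} (hμ : MemPp p μt) {t : ℝ} {g : Ed d → ℝ} {x : Ed d} {K : ℝ}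
    (h : ∀ ν : Measure (Ed d), MemPp p ν → ∀ c : ℝ, 0 ≤ c →
      phit φ t (Wp p μt ν).toNNReal ≤ ENNReal.ofReal c → (∫ y, g (x + y) ∂ν) - c ≤ K) :
    Sop p φ μt t g x ≤ K := by
  refine csSup_le ⟨_, μt, hμ, 0, le_rfl, ?_, rfl⟩ ?_
  · rw [wp_self hp hμ]; simp [phit_zero hφ]
  · rintro r ⟨ν, hν, c, hc, h1, rfl⟩
    exact h ν hν c hc h1

lemma sop_good {d : ℕ} {p : ℝ} (hp : 1 < p) {φ : ℝ≥0 → ℝ≥0∞} (hφ : IsPenalty p φ)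
    {μt : Measure (Ed d)} (hμ : MemPp p μt) {t B : ℝ} {g : Ed d → ℝ} (hg : GoodFn B g) :
    GoodFn B (Sop p φ μt t g) := by
  constructor
  · have hu := Metric.uniformContinuous_iff.1 hg.1
    refine Metric.uniformContinuous_iff.2 fun ε hε => ?_
    obtain ⟨δ, hδ, h⟩ := hu (ε / 2) (by positivity)
    refine ⟨δ, hδ, fun {a b} hab => ?_⟩
    have key : ∀ a b : Ed d, dist a b < δ →
        Sop p φ μt t g a ≤ Sop p φ μt t g b + ε / 2 := by
      intro a b hab
      refine sop_le hp hφ hμ fun ν hν c hc h1 => ?_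
      have hm := le_sop hg b hν hc h1
      have := hν.1
      have h2 : ∫ y, g (a + y) ∂ν ≤ ∫ y, (g (b + y) + ε / 2) ∂ν := by
        refine integral_mono (hg.integrable ν (by fun_prop))
          ((hg.integrable ν (by fun_prop)).add (integrable_const _)) fun y => ?_
        have := h (a := a + y) (b := b + y) (by simpa using hab)
        rw [Real.dist_eq] at this
        have := (abs_lt.1 this).2
        simp only
        linarith
      rw [integral_add (hg.integrable ν (by fun_prop)) (integrable_const _)] at h2
      simp at h2
      linarith
    have k1 := key a b hab
    have k2 := key b a (by rwa [dist_comm])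
    rw [Real.dist_eq, abs_lt]
    constructor <;> linarith
  · intro x
    have := hμ.1
    have h1 := le_sop_self (t := t) hp hφ hμ hg x
    have h2 := abs_le.1 (hg.integral_le μt (fun y => x + y))
    refine abs_le.2 ⟨by linarith [h2.1], sop_le hp hφ hμ fun ν hν c hc _ => ?_⟩
    have := hν.1
    have h2 := abs_le.1 (hg.integral_le ν (fun y => x + y))
    linarith [h2.2]

lemma phit_shift {d : ℕ} {p : ℝ} (hp : 1 < p) {φ : ℝ≥0 → ℝ≥0∞} (hφ : IsPenalty p φ)
    {μs : Measure (Ed d)} (hμ : MemPp p μs) {s : ℝ} (hs : 0 ≤ s) {v : Ed d} {c : ℝ}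
    (hv : φ ‖v‖₊ ≤ ENNReal.ofReal c) :
    phit φ s (Wp p μs (μs.map (fun y => y + s • v))).toNNReal ≤ ENNReal.ofReal (s * c) := by
  have hw := wp_shift hp hμ (s • v)
  rcases hs.eq_or_lt with rfl | hs
  · have : Wp p μs (μs.map (fun y => y + (0:ℝ) • v)) ≤ 0 := by simpa using hw
    rw [Real.toNNReal_of_nonpos this, phit_zero hφ]
    exact zero_le
  · unfold phit
    rw [if_pos hs, ENNReal.ofReal_mul hs.le]
    refine mul_le_mul' le_rfl (le_trans (hφ.mono ?_) hv)
    have hs' : 0 < s.toNNReal := Real.toNNReal_pos.2 hs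
    rw [div_le_iff₀ hs', Real.toNNReal_le_iff_le_coe]
    simpa [norm_smul, abs_of_pos hs, hs.le, mul_comm] using hw

lemma sop_lower {d : ℕ} {p : ℝ} (hp : 1 < p) {φ : ℝ≥0 → ℝ≥0∞} (hφ : IsPenalty p φ)
    {μs : Measure (Ed d)} (hμ : MemPp p μs) {s B : ℝ} (hs : 0 ≤ s) {v : Ed d} {c : ℝ}
    (hc : 0 ≤ c) (hv : φ ‖v‖₊ ≤ ENNReal.ofReal c) {g : Ed d → ℝ} (hg : GoodFn B g) (x : Ed d) :
    (∫ y, g (x + s • v + y) ∂μs) - s * c ≤ Sop p φ μs s g x := by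
  have h := le_sop hg x (memPp_shift hp hμ (s • v)) (by positivity) (phit_shift hp hφ hμ hs hv)
  have hcont : Continuous (fun y => g (x + y)) := hg.1.continuous.comp (by fun_prop)
  rw [integral_map (by fun_prop) hcont.aestronglyMeasurable] at h
  convert h using 4 with y
  abel_nf

/-- The lower comparison function. -/
def LowFn {d : ℕ} (μ : ℝ → Measure (Ed d)) (f : Ed d → ℝ) (v : Ed d) (c s : ℝ) (x : Ed d) : ℝ :=
  (∫ y, f (x + s • v + y) ∂(μ s)) - s * c

lemma flow_step {d : ℕ} {p : ℝ} (hp : 1 < p) {φ : ℝ≥0 → ℝ≥0∞} (hφ : IsPenalty p φ)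
    {μ : ℝ → Measure (Ed d)} (hμ : IsConvSemigroup p μ) {B Bg : ℝ} {f g : Ed d → ℝ}
    (hf : GoodFn B f) (hg : GoodFn Bg g) {v : Ed d} {c : ℝ}
    (hc : 0 ≤ c) (hv : φ ‖v‖₊ ≤ ENNReal.ofReal c) {τ a : ℝ} (hτ : 0 ≤ τ) (ha : 0 ≤ a)
    (h : ∀ x, LowFn μ f v c a x ≤ g x) (x : Ed d) :
    LowFn μ f v c (τ + a) x ≤ Sop p φ (μ τ) τ g x := by
  have hτm := hμ.2.2 τ hτ
  have ham := hμ.2.2 a ha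
  have := hτm.1
  have := ham.1
  refine le_trans ?_ (sop_lower hp hφ hτm hτ hc hv hg x)
  have hconv : μ (τ + a) = (μ τ).conv (μ a) := hμ.2.1 τ a hτ ha
  have hIntF : Integrable (fun y => f (x + (τ + a) • v + y)) ((μ τ).conv (μ a)) :=
    hf.integrable _ (by fun_prop)
  have h1 : ∫ y, f (x + (τ + a) • v + y) ∂(μ (τ + a)) =
      ∫ y, ∫ z, f (x + τ • v + y + a • v + z) ∂(μ a) ∂(μ τ) := by
    rw [hconv, integral_conv hIntF]
    congr! 5 with y z
    rw [add_smul]; abel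
  have hIntG : Integrable (fun y => ∫ z, f (x + τ • v + y + a • v + z) ∂(μ a)) (μ τ) := by
    have := (hf.integrable ((μ τ).prod (μ a)) (T := fun q => x + τ • v + q.1 + a • v + q.2)
      (by fun_prop)).integral_prod_left
    exact this
  have h2 : ∫ y, LowFn μ f v c a (x + τ • v + y) ∂(μ τ) ≤ ∫ y, g (x + τ • v + y) ∂(μ τ) := by
    refine integral_mono (hIntG.sub (integrable_const _)) (hg.integrable _ (by fun_prop)) ?_
    intro y
    exact h _
  unfold LowFn at h2
  rw [integral_sub hIntG (integrable_const _)] at h2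
  simp only [integral_const, probReal_univ, one_smul] at h2
  unfold LowFn
  rw [h1]
  linarith

lemma siter_lower {d : ℕ} {p : ℝ} (hp : 1 < p) {φ : ℝ≥0 → ℝ≥0∞} (hφ : IsPenalty p φ)
    {μ : ℝ → Measure (Ed d)} (hμ : IsConvSemigroup p μ) {B : ℝ} {f : Ed d → ℝ}
    (hf : GoodFn B f) {v : Ed d} {c : ℝ}
    (hc : 0 ≤ c) (hv : φ ‖v‖₊ ≤ ENNReal.ofReal c) {t : ℝ} (ht : 0 ≤ t) (n : ℕ) (x : Ed d) :
    LowFn μ f v c t x ≤ SiterN p φ μ n t f x := by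
  set k := ⌊(2:ℝ)^n * t⌋₊ with hk
  set τ : ℝ := ((2:ℝ)^n)⁻¹ with hτ
  have hτ0 : 0 ≤ τ := by positivity
  have ha : 0 ≤ t - k * τ := by
    have h1 := Nat.floor_le (a := (2:ℝ)^n * t) (by positivity)
    rw [← hk] at h1
    have h2 : (0:ℝ) < 2 ^ n := by positivity
    rw [hτ, sub_nonneg, ← div_eq_mul_inv, div_le_iff₀ h2]
    linarith
  have main : ∀ j : ℕ, GoodFn B ((fun g => Sop p φ (μ τ) τ g)^[j]
      (Sop p φ (μ (t - k * τ)) (t - k * τ) f)) ∧ ∀ x, LowFn μ f v c (j * τ + (t - k * τ)) x ≤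
      (fun g => Sop p φ (μ τ) τ g)^[j] (Sop p φ (μ (t - k * τ)) (t - k * τ) f) x := by
    intro j
    induction j with
    | zero =>
      refine ⟨sop_good hp hφ (hμ.2.2 _ ha) hf, fun x => ?_⟩
      have := sop_lower hp hφ (hμ.2.2 _ ha) ha hc hv hf x
      simpa [LowFn] using this
    | succ j ih =>
      simp only [Function.iterate_succ_apply']
      refine ⟨sop_good hp hφ (hμ.2.2 _ hτ0) ih.1, fun x => ?_⟩
      have := flow_step hp hφ hμ hf ih.1 hc hv hτ0 (a := j * τ + (t - k * τ))
        (by positivity) ih.2 x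
      have e : ((j + 1 : ℕ) : ℝ) * τ + (t - k * τ) = τ + (j * τ + (t - k * τ)) := by
        push_cast; ring
      rw [e]; exact this
  have := (main k).2 x
  have e : (k : ℝ) * τ + (t - k * τ) = t := by ring
  rw [e] at this
  exact this

lemma slim_lower {d : ℕ} {p : ℝ} (hp : 1 < p) {φ : ℝ≥0 → ℝ≥0∞} (hφ : IsPenalty p φ)
    {μ : ℝ → Measure (Ed d)} (hμ : IsConvSemigroup p μ) {B : ℝ} {f : Ed d → ℝ}
    (hf : GoodFn B f) {v : Ed d} {c : ℝ}
    (hc : 0 ≤ c) (hv : φ ‖v‖₊ ≤ ENNReal.ofReal c) {t : ℝ} (ht : 0 ≤ t) (x : Ed d) :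
    LowFn μ f v c t x ≤ Slim p φ μ t f x :=
  le_ciInf fun n => siter_lower hp hφ hμ hf hc hv ht n x

lemma slim_upper {d : ℕ} {p : ℝ} (hp : 1 < p) {φ : ℝ≥0 → ℝ≥0∞} (hφ : IsPenalty p φ)
    {μ : ℝ → Measure (Ed d)} (hμ : IsConvSemigroup p μ) {B : ℝ} {f : Ed d → ℝ}
    (hf : GoodFn B f) {t : ℝ} (ht : 0 ≤ t) (ht1 : t < 1) (x : Ed d) :
    Slim p φ μ t f x ≤ Sop p φ (μ t) t f x := by
  have hb : BddBelow (Set.range fun n => SiterN p φ μ n t f x) := by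
    refine ⟨LowFn μ f 0 0 t x, ?_⟩
    rintro _ ⟨n, rfl⟩
    exact siter_lower hp hφ hμ hf (v := 0) le_rfl (by simp [hφ.map_zero]) ht n x
  refine (ciInf_le hb 0).trans_eq ?_
  have : ⌊t⌋₊ = 0 := Nat.floor_eq_zero.2 ht1
  simp [SiterN, this]

/-! ### First order expansion -/

lemma core_expansion {d : ℕ} {p : ℝ} (hp : 1 < p) {B : ℝ} {f : Ed d → ℝ} (hf : GoodFn B f)
    (hdf : Differentiable ℝ f) {e C : ℝ} (he : 0 ≤ e) (hC : 0 ≤ C)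
    (hmod : ∀ z x, ‖fderiv ℝ f z - fderiv ℝ f x‖ ≤ e + C * ‖z - x‖ ^ (p - 1))
    {α : Type*} [MeasurableSpace α] (γ : Measure α) [IsProbabilityMeasure γ]
    {Y H : α → Ed d} (hYm : Measurable Y) (hHm : Measurable H) {s m : ℝ} (hs : 0 ≤ s) (hm : 0 ≤ m)
    (hH : (∫⁻ a, (‖H a‖₊ : ℝ≥0∞) ^ p ∂γ) ^ (1 / p) ≤ ENNReal.ofReal s)
    (hY : (∫⁻ a, (‖Y a‖₊ : ℝ≥0∞) ^ p ∂γ) ^ (1 / p) ≤ ENNReal.ofReal m) (x : Ed d) :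
    |(∫ a, f (x + Y a + H a) ∂γ) - (∫ a, f (x + Y a) ∂γ) - ∫ a, fderiv ℝ f x (H a) ∂γ|
      ≤ s * (e + C * (m + s) ^ (p - 1)) ∧
    |∫ a, fderiv ℝ f x (H a) ∂γ| ≤ ‖fderiv ℝ f x‖ * s := by
  have hp0 : (0:ℝ) < p := by linarith
  have hp1 : (0:ℝ) < p - 1 := by linarith
  have hpq := Real.HolderConjugate.conjExponent hp
  set q := p.conjExponent with hq
  have hqe : 1 / q = 1 / p * (p - 1) := by
    have := hpq.inv_add_inv_eq_one
    rw [one_div, one_div, mul_sub, inv_mul_cancel₀ hp0.ne']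
    linarith
  have mH : Measurable (fun a => (‖H a‖₊ : ℝ≥0∞)) := by fun_prop
  have mY : Measurable (fun a => (‖Y a‖₊ : ℝ≥0∞)) := by fun_prop
  have h1 : ∫⁻ a, (‖H a‖₊ : ℝ≥0∞) ∂γ ≤ ENNReal.ofReal s := by
    have := ENNReal.lintegral_mul_rpow_le_lintegral_rpow_mul_lintegral_rpow (μ := γ) hpq
      (f := fun a => (‖H a‖₊ : ℝ≥0∞)) (g := fun _ => 1) mH.aemeasurable aemeasurable_const
    simp only [ENNReal.one_rpow, mul_one, lintegral_const, measure_univ] at this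
    exact this.trans hH
  have hsum : (∫⁻ a, ((‖Y a‖₊ : ℝ≥0∞) + ‖H a‖₊) ^ p ∂γ) ^ (1 / p) ≤ ENNReal.ofReal (m + s) := by
    rw [ENNReal.ofReal_add hm hs]
    exact (ENNReal.lintegral_Lp_add_le mY.aemeasurable mH.aemeasurable hp.le).trans
      (add_le_add hY hH)
  have h2 : ∫⁻ a, (‖H a‖₊ : ℝ≥0∞) * ((‖Y a‖₊ : ℝ≥0∞) + ‖H a‖₊) ^ (p - 1) ∂γ ≤
      ENNReal.ofReal (s * (m + s) ^ (p - 1)) := by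
    refine (ENNReal.lintegral_mul_rpow_le_lintegral_rpow_mul_lintegral_rpow (μ := γ) hpq
      mH.aemeasurable (mY.add mH).aemeasurable).trans ?_
    rw [ENNReal.ofReal_mul hs, ← ENNReal.ofReal_rpow_of_nonneg (by positivity) hp1.le, hqe,
      ENNReal.rpow_mul]
    exact mul_le_mul' hH (ENNReal.rpow_le_rpow hsum hp1.le)
  have hHint : Integrable (fun a => ‖H a‖) γ := by
    refine ⟨hHm.norm.aestronglyMeasurable, ?_⟩
    rw [hasFiniteIntegral_iff_enorm]
    refine lt_of_le_of_lt ?_ (h1.trans_lt ENNReal.ofReal_lt_top)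
    simp [enorm_eq_nnnorm]
  have hHint' : Integrable H γ := (integrable_norm_iff hHm.aestronglyMeasurable).1 hHint
  have hL : Integrable (fun a => fderiv ℝ f x (H a)) γ :=
    (fderiv ℝ f x).integrable_comp hHint'
  have i1 : Integrable (fun a => f (x + Y a + H a)) γ := hf.integrable γ (by fun_prop)
  have i2 : Integrable (fun a => f (x + Y a)) γ := hf.integrable γ (by fun_prop)
  have hpt : ∀ a, |f (x + Y a + H a) - f (x + Y a) - fderiv ℝ f x (H a)| ≤
      e * ‖H a‖ + C * (‖H a‖ * (‖Y a‖ + ‖H a‖) ^ (p - 1)) := by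
    intro a
    have := (convex_closedBall x (‖Y a‖ + ‖H a‖)).norm_image_sub_le_of_norm_fderiv_le' (𝕜 := ℝ)
      (f := f) (φ := fderiv ℝ f x) (x := x + Y a) (y := x + Y a + H a)
      (C := e + C * (‖Y a‖ + ‖H a‖) ^ (p - 1)) (fun z _ => hdf z) ?_ ?_ ?_
    · simp only [add_sub_cancel_left, Real.norm_eq_abs] at this
      refine this.trans_eq (by ring)
    · intro z hz
      refine (hmod z x).trans ?_
      have : ‖z - x‖ ≤ ‖Y a‖ + ‖H a‖ := by simpa [dist_eq_norm] using hz
      gcongr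
    · simp [dist_eq_norm]
    · rw [Metric.mem_closedBall, dist_eq_norm, add_assoc, add_sub_cancel_left]
      exact norm_add_le _ _
  constructor
  · have i3 : Integrable (fun a => f (x + Y a + H a) - f (x + Y a)) γ := i1.sub i2
    rw [← integral_sub i1 i2, ← integral_sub i3 hL]
    have hfin := norm_integral_le_lintegral_norm (μ := γ)
      (fun a => f (x + Y a + H a) - f (x + Y a) - fderiv ℝ f x (H a))
    refine hfin.trans ?_
    have hnn : 0 ≤ s * (e + C * (m + s) ^ (p - 1)) := by positivity
    refine ENNReal.toReal_le_of_le_ofReal hnn ?_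
    calc ∫⁻ a, ENNReal.ofReal ‖f (x + Y a + H a) - f (x + Y a) - fderiv ℝ f x (H a)‖ ∂γ
        ≤ ∫⁻ a, (ENNReal.ofReal e * (‖H a‖₊ : ℝ≥0∞) +
          ENNReal.ofReal C * ((‖H a‖₊ : ℝ≥0∞) * ((‖Y a‖₊ : ℝ≥0∞) + ‖H a‖₊) ^ (p - 1))) ∂γ := by
          refine lintegral_mono fun a => ?_
          refine (ENNReal.ofReal_le_ofReal (hpt a)).trans_eq ?_
          rw [ENNReal.ofReal_add (by positivity) (by positivity), ENNReal.ofReal_mul he,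
            ENNReal.ofReal_mul hC, ENNReal.ofReal_mul (by positivity),
            ← ENNReal.ofReal_rpow_of_nonneg (by positivity) hp1.le,
            ENNReal.ofReal_add (by positivity) (by positivity)]
          simp only [ofReal_norm, enorm_eq_nnnorm]
      _ = ENNReal.ofReal e * ∫⁻ a, (‖H a‖₊ : ℝ≥0∞) ∂γ + ENNReal.ofReal C *
          ∫⁻ a, ((‖H a‖₊ : ℝ≥0∞) * ((‖Y a‖₊ : ℝ≥0∞) + ‖H a‖₊) ^ (p - 1)) ∂γ := by
          rw [lintegral_add_left (by fun_prop), lintegral_const_mul _ (by fun_prop),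
            lintegral_const_mul _ (by fun_prop)]
      _ ≤ ENNReal.ofReal e * ENNReal.ofReal s + ENNReal.ofReal C *
          ENNReal.ofReal (s * (m + s) ^ (p - 1)) := by gcongr
      _ = ENNReal.ofReal (s * (e + C * (m + s) ^ (p - 1))) := by
          rw [← ENNReal.ofReal_mul he, ← ENNReal.ofReal_mul hC,
            ← ENNReal.ofReal_add (by positivity) (by positivity)]
          congr 1; ring
  · have hfin := norm_integral_le_lintegral_norm (μ := γ) (fun a => fderiv ℝ f x (H a))
    refine hfin.trans (ENNReal.toReal_le_of_le_ofReal (by positivity) ?_)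
    calc ∫⁻ a, ENNReal.ofReal ‖fderiv ℝ f x (H a)‖ ∂γ
        ≤ ∫⁻ a, ENNReal.ofReal ‖fderiv ℝ f x‖ * (‖H a‖₊ : ℝ≥0∞) ∂γ := by
          refine lintegral_mono fun a => ?_
          refine (ENNReal.ofReal_le_ofReal ((fderiv ℝ f x).le_opNorm (H a))).trans_eq ?_
          rw [ENNReal.ofReal_mul (by positivity)]
          simp only [ofReal_norm, enorm_eq_nnnorm]
      _ = ENNReal.ofReal ‖fderiv ℝ f x‖ * ∫⁻ a, (‖H a‖₊ : ℝ≥0∞) ∂γ :=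
          lintegral_const_mul _ (by fun_prop)
      _ ≤ ENNReal.ofReal ‖fderiv ℝ f x‖ * ENNReal.ofReal s := by gcongr
      _ = _ := by rw [← ENNReal.ofReal_mul (by positivity)]

lemma norm_gradient_eq {d : ℕ} (f : Ed d → ℝ) (x : Ed d) : ‖gradient f x‖ = ‖fderiv ℝ f x‖ := by
  unfold gradient
  exact LinearIsometryEquiv.norm_map _ _

lemma fderiv_eq_inner {d : ℕ} (f : Ed d → ℝ) (x v : Ed d) :
    fderiv ℝ f x v = inner ℝ (gradient f x) v := by
  unfold gradient
  rw [InnerProductSpace.toDual_symm_apply]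

lemma bounded_of_c0 {d : ℕ} {F : Type*} [NormedAddCommGroup F] {g : Ed d → F} (hc : Continuous g)
    (h : Tendsto g (cocompact (Ed d)) (𝓝 0)) : ∃ M, 0 ≤ M ∧ ∀ x, ‖g x‖ ≤ M := by
  let G : C₀(Ed d, F) := ⟨⟨g, hc⟩, h⟩
  exact ⟨‖G.toBCF‖, norm_nonneg _, fun x => G.toBCF.norm_coe_le_norm x⟩

lemma c01_facts {d : ℕ} {f : Ed d → ℝ} (hf : IsC01 f) :
    (∃ B, GoodFn B f) ∧ Differentiable ℝ f ∧ (∃ M, 0 ≤ M ∧ ∀ x, ‖fderiv ℝ f x‖ ≤ M) ∧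
      UniformContinuous (fderiv ℝ f) := by
  obtain ⟨⟨hc, h0⟩, hcd, hg⟩ := hf
  have hfc : Continuous (fderiv ℝ f) := hcd.continuous_fderiv (by simp)
  have hf0 : Tendsto (fderiv ℝ f) (cocompact (Ed d)) (𝓝 0) := by
    rw [tendsto_zero_iff_norm_tendsto_zero] at hg ⊢
    simpa only [norm_gradient_eq] using hg
  obtain ⟨B, -, hB⟩ := bounded_of_c0 hc h0
  exact ⟨⟨B, hc.uniformContinuous_of_tendsto_cocompact h0, hB⟩, hcd.differentiable (by simp),
    bounded_of_c0 hfc hf0, hfc.uniformContinuous_of_tendsto_cocompact hf0⟩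

lemma modulus {d : ℕ} {p : ℝ} (hp : 1 < p) {f : Ed d → ℝ} {M : ℝ} (hM0 : 0 ≤ M)
    (hM : ∀ x, ‖fderiv ℝ f x‖ ≤ M) (hu : UniformContinuous (fderiv ℝ f)) {e : ℝ} (he : 0 < e) :
    ∃ C, 0 ≤ C ∧ ∀ z x, ‖fderiv ℝ f z - fderiv ℝ f x‖ ≤ e + C * ‖z - x‖ ^ (p - 1) := by
  obtain ⟨δ, hδ, h⟩ := Metric.uniformContinuous_iff.1 hu e he
  have hδp : 0 < δ ^ (p - 1) := by positivity
  refine ⟨2 * M / δ ^ (p - 1), by positivity, fun z x => ?_⟩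
  rcases lt_or_ge (dist z x) δ with hd | hd
  · have := h hd
    rw [dist_eq_norm] at this
    have : 0 ≤ 2 * M / δ ^ (p - 1) * ‖z - x‖ ^ (p - 1) := by positivity
    linarith
  · rw [dist_eq_norm] at hd
    have h1 : δ ^ (p - 1) ≤ ‖z - x‖ ^ (p - 1) :=
      Real.rpow_le_rpow hδ.le hd (by linarith)
    have h2 : 2 * M ≤ 2 * M / δ ^ (p - 1) * ‖z - x‖ ^ (p - 1) := by
      rw [div_mul_eq_mul_div, le_div_iff₀ hδp]
      gcongr
    have := norm_sub_le (fderiv ℝ f z) (fderiv ℝ f x)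
    linarith [hM z, hM x]

lemma transport_bound {d : ℕ} {p : ℝ} (hp : 1 < p) {B : ℝ} {f : Ed d → ℝ} (hf : GoodFn B f)
    (hdf : Differentiable ℝ f) {e C : ℝ} (he : 0 ≤ e) (hC : 0 ≤ C)
    (hmod : ∀ z x, ‖fderiv ℝ f z - fderiv ℝ f x‖ ≤ e + C * ‖z - x‖ ^ (p - 1))
    {μ ν : Measure (Ed d)} (hμ : MemPp p μ) (hν : MemPp p ν) (x : Ed d) :
    (∫ y, f (x + y) ∂ν) - (∫ y, f (x + y) ∂μ) ≤ Wp p μ ν * (‖fderiv ℝ f x‖ + (e + C *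
      (Wp p μ (Measure.dirac 0) + Wp p μ ν) ^ (p - 1))) := by
  have := hμ.1
  have key : ∀ s, Wp p μ ν < s → (∫ y, f (x + y) ∂ν) - (∫ y, f (x + y) ∂μ) ≤
      s * (‖fderiv ℝ f x‖ + (e + C * (Wp p μ (Measure.dirac 0) + s) ^ (p - 1))) := by
    intro s hs
    have hs0 : 0 ≤ s := (wp_nonneg p μ ν).trans hs.le
    obtain ⟨γ, hγ, hcost⟩ := wp_exists hp hμ hν hs
    have := coupling_prob hγ
    have hY : (∫⁻ q, (‖q.1‖₊ : ℝ≥0∞) ^ p ∂γ) ^ (1 / p) ≤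
        ENNReal.ofReal (Wp p μ (Measure.dirac 0)) := by
      rw [coupling_lintegral_fst hγ (measurable_nn p)]
      exact wp_dirac hp hμ
    obtain ⟨h1, h2⟩ := core_expansion hp hf hdf he hC hmod γ (Y := fun q => q.1)
      (H := fun q => q.2 - q.1) (by fun_prop) (by fun_prop) hs0 (wp_nonneg p _ _) hcost hY x
    have hcont : Continuous (fun y => f (x + y)) := hf.1.continuous.comp (by fun_prop)
    have e1 : ∫ q, f (x + q.1) ∂γ = ∫ y, f (x + y) ∂μ := by
      rw [← hγ.1, integral_map (by fun_prop) hcont.aestronglyMeasurable]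
    have e2 : ∫ q, f (x + q.1 + (q.2 - q.1)) ∂γ = ∫ y, f (x + y) ∂ν := by
      rw [← hγ.2, integral_map (by fun_prop) hcont.aestronglyMeasurable]
      congr! 3 with q
      abel
    rw [e1, e2] at h1
    have h1' := (abs_le.1 h1).2
    have h2' := (abs_le.1 h2).2
    linarith
  have hcont : Continuous (fun s : ℝ => s * (‖fderiv ℝ f x‖ + (e + C *
      (Wp p μ (Measure.dirac 0) + s) ^ (p - 1)))) := by
    have : Continuous (fun s : ℝ => (Wp p μ (Measure.dirac 0) + s) ^ (p - 1)) :=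
      (Real.continuous_rpow_const (by linarith)).comp (by fun_prop)
    fun_prop
  have hlim := (hcont.tendsto (Wp p μ ν)).mono_left (nhdsWithin_le_nhds (s := Set.Ioi (Wp p μ ν)))
  refine ge_of_tendsto hlim ?_
  filter_upwards [self_mem_nhdsWithin] with s hs using key s hs

lemma sop_upper {d : ℕ} {p : ℝ} (hp : 1 < p) {φ : ℝ≥0 → ℝ≥0∞} (hφ : IsPenalty p φ)
    {B : ℝ} {f : Ed d → ℝ} (hf : GoodFn B f)
    (hdf : Differentiable ℝ f) {e C : ℝ} (he : 0 ≤ e) (hC : 0 ≤ C)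
    (hmod : ∀ z x, ‖fderiv ℝ f z - fderiv ℝ f x‖ ≤ e + C * ‖z - x‖ ^ (p - 1))
    {M : ℝ≥0} (hM : ∀ x, ‖fderiv ℝ f x‖ ≤ M) {R : ℝ≥0}
    (hR : ∀ r, R ≤ r → ((3 * M * r : ℝ≥0) : ℝ≥0∞) ≤ φ r)
    {t : ℝ} (ht : 0 < t) {μt : Measure (Ed d)} (hμ : MemPp p μt) (x : Ed d) :
    Sop p φ μt t f x ≤ (∫ y, f (x + y) ∂μt) + t * (phiStar φ ‖gradient f x‖₊).toReal +
      t * (R * (e + C * (Wp p μt (Measure.dirac 0) + t * R) ^ (p - 1))) := by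
  refine sop_le hp hφ hμ fun ν hν c hc hpc => ?_
  set W := Wp p μt ν with hW
  set m := Wp p μt (Measure.dirac 0) with hm
  have hm0 : 0 ≤ m := wp_nonneg _ _ _
  have hW0 : 0 ≤ W := wp_nonneg _ _ _
  have hp1 : 0 ≤ p - 1 := by linarith
  set r : ℝ≥0 := W.toNNReal / t.toNNReal with hr
  have ht' : 0 < t.toNNReal := Real.toNNReal_pos.2 ht
  have hWr : W = t * r := by
    rw [hr]; push_cast
    rw [Real.coe_toNNReal _ hW0, Real.coe_toNNReal _ ht.le]; field_simp
  have hpc' : (t.toNNReal : ℝ≥0∞) * φ r ≤ ENNReal.ofReal c := by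
    unfold phit at hpc
    rwa [if_pos ht] at hpc
  have hfin : φ r ≠ ∞ := by
    intro h
    rw [h, ENNReal.mul_top (by simpa using ht)] at hpc'
    exact ENNReal.ofReal_ne_top (top_le_iff.1 hpc')
  have hcr : t * (φ r).toReal ≤ c := by
    have := ENNReal.toReal_le_of_le_ofReal hc hpc'
    rwa [ENNReal.toReal_mul, ENNReal.coe_toReal, Real.coe_toNNReal _ ht.le] at this
  have hnn : 0 ≤ t * (R * (e + C * (m + t * R) ^ (p - 1))) := by positivity
  have hst : 0 ≤ t * (phiStar φ ‖gradient f x‖₊).toReal := by positivity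
  rcases le_total R r with hle | hle
  · have h1 := transport_bound hp hf hdf (e := 2 * M) (C := 0) (by positivity) le_rfl (by
      intro z x
      have := norm_sub_le (fderiv ℝ f z) (fderiv ℝ f x)
      linarith [hM z, hM x]) hμ hν x
    rw [← hW] at h1
    have h2 : W * (‖fderiv ℝ f x‖ + (2 * M + 0 * (m + W) ^ (p - 1))) ≤ W * (3 * M) := by
      refine mul_le_mul_of_nonneg_left ?_ hW0
      linarith [hM x]
    have h3 := ENNReal.toReal_mono hfin (hR r hle)
    rw [ENNReal.coe_toReal] at h3
    push_cast at h3
    have h4 := mul_le_mul_of_nonneg_left h3 ht.le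
    have h5 : W * (3 * M) = t * (3 * M * r) := by rw [hWr]; ring
    linarith
  · have h1 := transport_bound hp hf hdf he hC hmod hμ hν x
    rw [← hW, ← hm] at h1
    have hle' : (r : ℝ) ≤ R := by exact_mod_cast hle
    have hWR : W ≤ t * R := by rw [hWr]; gcongr
    have h2 : W * (e + C * (m + W) ^ (p - 1)) ≤ t * R * (e + C * (m + t * R) ^ (p - 1)) := by
      gcongr
    have h3 : (r : ℝ) * ‖fderiv ℝ f x‖ - (φ r).toReal ≤ (phiStar φ ‖gradient f x‖₊).toReal := by
      have h := le_iSup (fun r : ℝ≥0 => ((r * ‖gradient f x‖₊ : ℝ≥0) : ℝ≥0∞) - φ r) r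
      have h' : ((r * ‖gradient f x‖₊ : ℝ≥0) : ℝ≥0∞) ≤ phiStar φ ‖gradient f x‖₊ + φ r :=
        tsub_le_iff_right.1 h
      have h'' := ENNReal.toReal_mono
        (ENNReal.add_ne_top.2 ⟨phiStar_ne_top hp hφ _, hfin⟩) h'
      rw [ENNReal.toReal_add (phiStar_ne_top hp hφ _) hfin, ENNReal.coe_toReal] at h''
      push_cast at h''
      rw [norm_gradient_eq] at h''
      linarith
    have h4 := mul_le_mul_of_nonneg_left h3 ht.le
    have h5 : W * ‖fderiv ℝ f x‖ = t * (r * ‖fderiv ℝ f x‖) := by rw [hWr]; ring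
    have h6 : t * R * (e + C * (m + t * R) ^ (p - 1)) =
      t * (R * (e + C * (m + t * R) ^ (p - 1))) := by ring
    linarith

lemma exists_direction {d : ℕ} {p : ℝ} (hp : 1 < p) {φ : ℝ≥0 → ℝ≥0∞} (hφ : IsPenalty p φ)
    {f : Ed d → ℝ} {M : ℝ≥0} (hM : ∀ x, ‖fderiv ℝ f x‖ ≤ M) {R : ℝ≥0}
    (hR : ∀ r, R ≤ r → ((3 * M * r : ℝ≥0) : ℝ≥0∞) ≤ φ r) {η : ℝ} (hη : 0 < η) (x : Ed d) :
    ∃ (v : Ed d) (c : ℝ), ‖v‖ ≤ R ∧ 0 ≤ c ∧ φ ‖v‖₊ ≤ ENNReal.ofReal c ∧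
      (phiStar φ ‖gradient f x‖₊).toReal - η ≤ fderiv ℝ f x v - c := by
  set P := (phiStar φ ‖gradient f x‖₊) with hP
  have hPt : P ≠ ∞ := phiStar_ne_top hp hφ _
  rcases lt_or_ge (P.toReal - η) 0 with hneg | hpos
  · exact ⟨0, 0, by simp, le_rfl, by simp [hφ.map_zero], by simpa using hneg.le⟩
  · have hlt : ENNReal.ofReal (P.toReal - η) < P := by
      rw [ENNReal.ofReal_lt_iff_lt_toReal hpos hPt]; linarith
    obtain ⟨r, hr⟩ := lt_iSup_iff.1 hlt
    have hfin : φ r ≠ ∞ := by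
      intro h
      rw [h] at hr
      simp at hr
    have hgM : ‖gradient f x‖₊ ≤ M := by
      have := hM x
      rw [← norm_gradient_eq] at this
      exact_mod_cast this
    have hrR : r ≤ R := by
      by_contra hcon
      have h1 := hR r (not_le.1 hcon).le
      have h2 : ((r * ‖gradient f x‖₊ : ℝ≥0) : ℝ≥0∞) ≤ φ r := by
        refine le_trans ?_ h1
        norm_cast
        calc r * ‖gradient f x‖₊ ≤ r * M := by gcongr
          _ = 1 * M * r := by ring
          _ ≤ 3 * M * r := by gcongr; norm_num
      rw [tsub_eq_zero_of_le h2] at hr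
      exact absurd hr (not_lt.2 (zero_le))
    set g := gradient f x with hg
    have hv : ‖((r : ℝ) / ‖g‖) • g‖ ≤ r := by
      rw [norm_smul, Real.norm_eq_abs, abs_of_nonneg (by positivity)]
      rcases eq_or_ne ‖g‖ 0 with h0 | h0
      · simp [h0]
      · rw [div_mul_cancel₀ _ h0]
    have hle : P.toReal - η ≤ r * ‖g‖ - (φ r).toReal := by
      have h1 : ENNReal.ofReal (P.toReal - η) + φ r < ((r * ‖g‖₊ : ℝ≥0) : ℝ≥0∞) :=
        lt_tsub_iff_right.1 hr
      have h2 := ENNReal.toReal_mono (by simp only [ne_eq, ENNReal.coe_ne_top, not_false_eq_true]) h1.le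
      rw [ENNReal.toReal_add ENNReal.ofReal_ne_top hfin, ENNReal.toReal_ofReal hpos,
        ENNReal.coe_toReal] at h2
      push_cast at h2
      linarith
    refine ⟨((r : ℝ) / ‖g‖) • g, (φ r).toReal, hv.trans (by exact_mod_cast hrR), by positivity,
      ?_, ?_⟩
    · rw [ENNReal.ofReal_toReal hfin]
      exact hφ.mono (by exact_mod_cast hv)
    · have : fderiv ℝ f x (((r : ℝ) / ‖g‖) • g) = r * ‖g‖ := by
        rw [fderiv_eq_inner, ← hg, inner_smul_right, real_inner_self_eq_norm_sq]
        rcases eq_or_ne ‖g‖ 0 with h0 | h0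
        · simp [h0]
        · field_simp
      rw [this]; exact hle

lemma low_bound {d : ℕ} {p : ℝ} (hp : 1 < p) {B : ℝ} {f : Ed d → ℝ} (hf : GoodFn B f)
    (hdf : Differentiable ℝ f) {e C : ℝ} (he : 0 ≤ e) (hC : 0 ≤ C)
    (hmod : ∀ z x, ‖fderiv ℝ f z - fderiv ℝ f x‖ ≤ e + C * ‖z - x‖ ^ (p - 1))
    {μ : ℝ → Measure (Ed d)} {t : ℝ} (ht : 0 < t) (hμ : MemPp p (μ t)) {R : ℝ≥0} {v : Ed d}
    (hv : ‖v‖ ≤ R) (c : ℝ) (x : Ed d) :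
    (∫ y, f (x + y) ∂(μ t)) + t * (fderiv ℝ f x v - c) -
      t * (R * (e + C * (Wp p (μ t) (Measure.dirac 0) + t * R) ^ (p - 1))) ≤
      LowFn μ f v c t x := by
  have := hμ.1
  have hp0 : 0 < p := by linarith
  have hs : ‖t • v‖ ≤ t * R := by
    rw [norm_smul, Real.norm_eq_abs, abs_of_pos ht]; gcongr
  have hH : (∫⁻ _, (‖t • v‖₊ : ℝ≥0∞) ^ p ∂(μ t)) ^ (1 / p) ≤ ENNReal.ofReal (t * R) := by
    simp only [lintegral_const, measure_univ, mul_one]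
    rw [one_div, ENNReal.rpow_rpow_inv hp0.ne', ← enorm_eq_nnnorm, ← ofReal_norm]
    exact ENNReal.ofReal_le_ofReal hs
  obtain ⟨h1, -⟩ := core_expansion hp hf hdf he hC hmod (μ t) (Y := fun y => y)
      (H := fun _ => t • v) (by fun_prop) (by fun_prop) (by positivity) (wp_nonneg p _ _) hH
      (wp_dirac hp hμ) x
  have h1' := (abs_le.1 h1).1
  simp only [integral_const, probReal_univ, one_smul, map_smul, smul_eq_mul] at h1'
  have e2 : ∫ y, f (x + y + t • v) ∂(μ t) = ∫ y, f (x + t • v + y) ∂(μ t) := by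
    congr! 3 with y
    abel
  rw [e2] at h1'
  unfold LowFn
  linarith

/-- for `f ∈ D(A^μ) ∩ C₀¹(ℝ^d)`,
`(𝒮(t)f − f)/t → A^μ f + φ*(|∇f|)` uniformly as `t ↓ 0`. -/
theorem stmt_4 (d : ℕ) (hd : 1 ≤ d) (p : ℝ) (hp : 1 < p)
    (φ : ℝ≥0 → ℝ≥0∞) (hφ : IsPenalty p φ)
    (μ : ℝ → Measure (Ed d)) (hμ : IsConvSemigroup p μ) (hμ0 : WContinuousAtZero p μ)
    (f Af : Ed d → ℝ) (hfdom : HasGenerator μ f Af) (hf : IsC01 f) :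
    (∀ x, phiStar φ ‖gradient f x‖₊ ≠ ∞) ∧
    TendstoUniformly (fun t x => (Slim p φ μ t f x - f x) / t)
      (fun x => Af x + (phiStar φ ‖gradient f x‖₊).toReal) (𝓝[>] (0:ℝ)) := by
  obtain ⟨⟨B, hB⟩, hdf, ⟨M', hM0, hM'⟩, hu⟩ := c01_facts hf
  refine ⟨fun x => phiStar_ne_top hp hφ _, ?_⟩
  lift M' to ℝ≥0 using hM0 with M
  obtain ⟨R, hR0, hR⟩ := penalty_growth hp hφ (3 * M)
  have hR0' : (0:ℝ) < R := by exact_mod_cast hR0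
  rw [Metric.tendstoUniformly_iff]
  intro ε hε
  obtain ⟨C, hC, hmod⟩ := modulus hp M.2 hM' hu (e := ε / (8 * R)) (by positivity)
  have hlim : Tendsto (fun t => R * (C * (Wp p (μ t) (Measure.dirac 0) + t * R) ^ (p - 1)))
      (𝓝[>] (0:ℝ)) (𝓝 0) := by
    have h1 : Tendsto (fun t : ℝ => t * (R:ℝ)) (𝓝[>] (0:ℝ)) (𝓝 0) := by
      have : Continuous (fun t : ℝ => t * (R:ℝ)) := by fun_prop
      simpa using (this.tendsto 0).mono_left nhdsWithin_le_nhds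
    have h2 := hμ0.add h1
    rw [add_zero] at h2
    have h3 := ((Real.continuous_rpow_const (q := p - 1) (by linarith)).tendsto 0).comp h2
    rw [Real.zero_rpow (by linarith)] at h3
    simpa using (h3.const_mul C).const_mul (R:ℝ)
  have hev := hlim.eventually (gt_mem_nhds (show (0:ℝ) < ε / 8 by positivity))
  have hgen := Metric.tendstoUniformly_iff.1 hfdom (ε / 4) (by positivity)
  have h1 : ∀ᶠ t in 𝓝[>] (0:ℝ), t < 1 :=
    nhdsWithin_le_nhds (gt_mem_nhds one_pos)
  filter_upwards [hev, hgen, h1, self_mem_nhdsWithin] with t hev hgen ht1 ht x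
  have ht : 0 < t := ht
  have hmem := hμ.2.2 t ht.le
  have hg := hgen x
  rw [Real.dist_eq, abs_lt] at hg ⊢
  have herr : R * (ε / (8 * R) + C * (Wp p (μ t) (Measure.dirac 0) + t * R) ^ (p - 1)) <
      ε / 4 := by
    have : (R:ℝ) * (ε / (8 * R)) = ε / 8 := by field_simp
    rw [mul_add, this]; linarith
  have hup := (slim_upper hp hφ hμ hB ht.le ht1 x).trans
    (sop_upper hp hφ hB hdf (by positivity) hC hmod hM' hR ht hmem x)
  obtain ⟨v, c, hvR, hc, hvc, hval⟩ := exists_direction hp hφ hM' hR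
    (η := ε / 4) (by positivity) x
  have hlow := (low_bound hp hB hdf (by positivity) hC hmod ht hmem hvR c x).trans
    (slim_lower hp hφ hμ hB hc hvc ht.le x)
  set E := R * (ε / (8 * R) + C * (Wp p (μ t) (Measure.dirac 0) + t * R) ^ (p - 1)) with hE
  set P := (phiStar φ ‖gradient f x‖₊).toReal with hP
  set I := ∫ y, f (x + y) ∂(μ t) with hI
  have hSmu : Smu μ t f x = I := rfl
  rw [hSmu] at hg
  set S := Slim p φ μ t f x with hS
  have u1 : (S - f x) / t ≤ (I - f x) / t + P + E := by
    rw [div_le_iff₀ ht]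
    have : ((I - f x) / t + P + E) * t = I - f x + t * P + t * E := by field_simp
    rw [this]; linarith
  have u2 : (I - f x) / t + (fderiv ℝ f x v - c) - E ≤ (S - f x) / t := by
    rw [le_div_iff₀ ht]
    have : ((I - f x) / t + (fderiv ℝ f x v - c) - E) * t =
      I - f x + t * (fderiv ℝ f x v - c) - t * E := by field_simp
    rw [this]; linarith
  constructor <;> linarith [hg.1, hg.2]
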